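/- For every convex body K ⊂ ℝ², one has 𝔼 U_{K,3}² ≤ 1/72, with equality when K is a triangle. Equivalently, the isotropic constant L_K, given by L_K² = (2! 𝔼 U_{K,3}²/3)^{1/2} for K ⊂ ℝ² with centroid at the origin, satisfies L_K ≤ L_Δ = 108^{-1/4}, where Δ is a triangle with centroid at the origin. -/

import Mathlib

open MeasureTheory Set

noncomputable section

variable {E : Type*} [NormedAddCommGroup E] [InnerProductSpace ℝ E]

/-- A symmetric convex body: a compact convex set with nonempty interior with `K = -K`. -/
def IsSymConvexBody (K : Set E) : Prop :=
  IsCompact K ∧ Convex ℝ K ∧ (interior K).Nonempty ∧ K = -K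

/-- `momentU n N K p = 𝔼 U_{K,N}^p`, the `p`-th moment of the normalized volume of the
convex hull of `N` independent uniform random points in `K ⊆ ℝⁿ`. -/
def momentU (n N : ℕ) (K : Set (EuclideanSpace ℝ (Fin n))) (p : ℝ) : ℝ :=
  (∫ x : Fin N → EuclideanSpace ℝ (Fin n) in {x | ∀ i, x i ∈ K},
      ((volume (convexHull ℝ (Set.range x))).toReal / (volume K).toReal) ^ p) /
    (volume K).toReal ^ N

/-- `momentV n N K p = 𝔼 V_{K,N}^p`, the `p`-th moment of the normalized volume of the
symmetric convex hull `conv{±x₁, …, ±x_N}` of `N` independent uniform random points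
in `K ⊆ ℝⁿ`. -/
def momentV (n N : ℕ) (K : Set (EuclideanSpace ℝ (Fin n))) (p : ℝ) : ℝ :=
  (∫ x : Fin N → EuclideanSpace ℝ (Fin n) in {x | ∀ i, x i ∈ K},
      ((volume (convexHull ℝ (Set.range x ∪ -Set.range x))).toReal / (volume K).toReal) ^ p) /
    (volume K).toReal ^ N

/-- A convex body: a compact convex set with nonempty interior. -/
def IsConvexBody (K : Set E) : Prop :=
  IsCompact K ∧ Convex ℝ K ∧ (interior K).Nonempty

/-!
The second moment of the area of a random triangle in `K` is, up to a factor, the determinant of the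
matrix of inertia of `K` in homogeneous coordinates, so the extremal value is computed on the right
triangle and transported to every triangle by affine maps.

For a polygon with more than three vertices, pick a vertex `v` with neighbours `u` and `w` and slide
it parallel to `u - w`, shearing the triangle `u v w` along and keeping the rest of the polygon
fixed. The shear preserves area, and under it each triangle determinant is an affine function of the
sliding parameter, so the second moment is a convex function of that parameter. It is therefore at
most its maximum at the two parameters where `u` or `w` ceases to be a vertex. Induction on the
number of vertices reduces to triangles, and general convex bodies are limits of polygons.
-/

lemma integral_det_mul_det_pi {ι X : Type*} [Fintype ι] [DecidableEq ι] [MeasurableSpace X]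
    {μ : Measure X} [SigmaFinite μ] {f g : ι → X → ℝ}
    (hfg : ∀ i j, Integrable (fun x => f i x * g j x) μ) :
    ∫ x : ι → X, (Matrix.of fun i j => f i (x j)).det * (Matrix.of fun i j => g i (x j)).det
        ∂Measure.pi (fun _ => μ) =
      (Fintype.card ι).factorial * (Matrix.of fun i j => ∫ x, f i x * g j x ∂μ).det := by
  set M : Matrix ι ι ℝ := Matrix.of fun i j => ∫ x, f i x * g j x ∂μ
  let sgn (σ : Equiv.Perm ι) : ℝ := ((Equiv.Perm.sign σ : ℤ) : ℝ)
  let term (σ τ : Equiv.Perm ι) (x : ι → X) : ℝ := ∏ i, f (σ i) (x i) * g (τ i) (x i)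
  have expand (x : ι → X) :
      (Matrix.of fun i j => f i (x j)).det * (Matrix.of fun i j => g i (x j)).det =
        ∑ σ, ∑ τ, sgn σ * sgn τ * term σ τ x := by
    simp only [Matrix.det_apply', Matrix.of_apply, Finset.sum_mul_sum, term,
      Finset.prod_mul_distrib, sgn]
    refine Finset.sum_congr rfl fun σ _ => Finset.sum_congr rfl fun τ _ => ?_
    ring
  have integrable_term (σ τ : Equiv.Perm ι) :
      Integrable (fun x => sgn σ * sgn τ * term σ τ x) (Measure.pi fun _ => μ) :=
    (Integrable.fintype_prod fun i => hfg (σ i) (τ i)).const_mul _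
  have integral_term (σ τ : Equiv.Perm ι) :
      ∫ x, term σ τ x ∂Measure.pi (fun _ => μ) = ∏ i, M (σ i) (τ i) :=
    integral_fintype_prod_eq_prod fun i y => f (σ i) y * g (τ i) y
  have row_sum (σ : Equiv.Perm ι) : ∑ τ, sgn τ * ∏ i, M (σ i) (τ i) = sgn σ * M.det := by
    rw [← Matrix.det_permute σ M, ← Matrix.det_transpose, Matrix.det_apply']
    rfl
  have sgn_mul_self (σ : Equiv.Perm ι) : sgn σ * sgn σ = 1 := by
    simp only [sgn, ← Int.cast_mul, ← Units.val_mul, Int.units_mul_self, Units.val_one,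
      Int.cast_one]
  calc ∫ x : ι → X, (Matrix.of fun i j => f i (x j)).det * (Matrix.of fun i j => g i (x j)).det
        ∂Measure.pi (fun _ => μ)
      = ∑ σ, ∑ τ, sgn σ * sgn τ * ∏ i, M (σ i) (τ i) := by
        simp only [expand]
        rw [integral_finsetSum _ fun σ _ => integrable_finsetSum _ fun τ _ => integrable_term σ τ]
        refine Finset.sum_congr rfl fun σ _ => ?_
        rw [integral_finsetSum _ fun τ _ => integrable_term σ τ]
        simp only [integral_const_mul, integral_term]
    _ = ∑ _σ : Equiv.Perm ι, M.det := by
        refine Finset.sum_congr rfl fun σ _ => ?_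
        simp only [mul_assoc, ← Finset.mul_sum, row_sum]
        rw [← mul_assoc, sgn_mul_self, one_mul]
    _ = (Fintype.card ι).factorial * M.det := by
        rw [Finset.sum_const, Finset.card_univ, Fintype.card_perm, nsmul_eq_mul]

lemma pow_card_mul_integral_pi_image {ι X : Type*} [Fintype ι] [MeasurableSpace X]
    {μ : Measure X} [SigmaFinite μ] {F : X → X} (hF : MeasurableEmbedding F) {c : NNReal}
    (hmap : μ.map F = c • μ) (K : Set X) {g : (ι → X) → ℝ} (hg : Measurable g) :
    (c : ℝ) ^ Fintype.card ι * ∫ x, g x ∂Measure.pi (fun _ => μ.restrict (F '' K)) =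
      ∫ x, g (fun i => F (x i)) ∂Measure.pi (fun _ => μ.restrict K) := by
  have map_restrict : (μ.restrict K).map F = c • μ.restrict (F '' K) := by
    rw [← Measure.restrict_smul, ← hmap, hF.restrict_map, preimage_image_eq _ hF.injective]
  have : SigmaFinite ((μ.restrict K).map F) := by rw [map_restrict]; infer_instance
  have map_pi : (Measure.pi fun _ : ι => μ.restrict K).map (fun x i => F (x i)) =
      c ^ Fintype.card ι • Measure.pi (fun _ => μ.restrict (F '' K)) := by
    rw [Measure.pi_map_pi fun _ => hF.measurable.aemeasurable, map_restrict]
    refine Measure.pi_eq fun s _ => ?_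
    simp only [Measure.smul_apply, Measure.pi_pi, ENNReal.smul_def, smul_eq_mul,
      Finset.prod_mul_distrib, Finset.prod_const, Finset.card_univ, ENNReal.coe_pow]
  have measurable_comp : Measurable fun (x : ι → X) i => F (x i) :=
    measurable_pi_lambda _ fun i => hF.measurable.comp (measurable_pi_apply i)
  have change_variables := integral_map measurable_comp.aemeasurable
    (hg.aestronglyMeasurable (μ := (Measure.pi fun _ : ι => μ.restrict K).map _))
  rw [← change_variables, map_pi, integral_smul_nnreal_measure, NNReal.smul_def, smul_eq_mul,
    NNReal.coe_pow]

lemma setIntegral_prod_eq_integral_setIntegral_fiber {X Y : Type*} [MeasurableSpace X]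
    [MeasurableSpace Y] {μ : Measure X} {ν : Measure Y} [SFinite μ] [SFinite ν] {R : Set (X × Y)}
    (hR : MeasurableSet R) {f : X × Y → ℝ} (hf : IntegrableOn f R (μ.prod ν)) :
    ∫ z in R, f z ∂μ.prod ν = ∫ x, ∫ y in Prod.mk x ⁻¹' R, f (x, y) ∂ν ∂μ := by
  rw [← integral_indicator hR, integral_prod _ (hf.integrable_indicator hR)]
  refine integral_congr_ae (.of_forall fun x => ?_)
  exact integral_indicator (f := fun y => f (x, y)) (measurable_prodMk_left hR)

lemma convexOn_integral {X F : Type*} [MeasurableSpace X] {μ : Measure X} [AddCommGroup F]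
    [Module ℝ F] {s : Set F} (hs : Convex ℝ s) {f : F → X → ℝ}
    (hf : ∀ x, ConvexOn ℝ s fun t => f t x) (hf_int : ∀ t ∈ s, Integrable (f t) μ) :
    ConvexOn ℝ s fun t => ∫ x, f t x ∂μ := by
  refine ⟨hs, fun t ht u hu a b ha hb hab => ?_⟩
  simp only [smul_eq_mul]
  rw [← integral_const_mul, ← integral_const_mul,
    ← integral_add ((hf_int t ht).const_mul a) ((hf_int u hu).const_mul b)]
  exact integral_mono (hf_int _ (hs ht hu ha hb hab))
    (((hf_int t ht).const_mul a).add ((hf_int u hu).const_mul b))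
    fun x => (hf x).2 ht hu ha hb hab

section AffineHaar

variable {V : Type*} [NormedAddCommGroup V] [NormedSpace ℝ V] [FiniteDimensional ℝ V]
  [MeasurableSpace V] [BorelSpace V] (μ : Measure V) [μ.IsAddHaarMeasure]

lemma addHaar_image_affineMap (A : V →ᵃ[ℝ] V) (s : Set V) :
    μ (A '' s) = ENNReal.ofReal |LinearMap.det A.linear| * μ s := by
  have decomp : (A : V → V) = (fun x => x + A 0) ∘ A.linear := A.decomp
  rw [decomp, image_comp, ← Measure.addHaar_image_linearMap, image_add_right,
    measure_preimage_add_right]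

lemma map_affineMap_addHaar_eq_smul_addHaar {A : V →ᵃ[ℝ] V} (hA : LinearMap.det A.linear ≠ 0) :
    μ.map A = Real.nnabs (LinearMap.det A.linear)⁻¹ • μ := by
  have decomp : (A : V → V) = (fun x => x + A 0) ∘ A.linear := A.decomp
  rw [decomp, ← Measure.map_map (measurable_add_const _)
      A.linear.continuous_of_finiteDimensional.measurable,
    Measure.map_linearMap_addHaar_eq_smul_addHaar μ hA, Measure.map_smul,
    map_add_right_eq_self, ENNReal.ofReal_eq_coe_nnreal (abs_nonneg _)]
  rfl

lemma affineMap_measurableEmbedding {A : V →ᵃ[ℝ] V} (hA : LinearMap.det A.linear ≠ 0) :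
    MeasurableEmbedding A :=
  A.continuous_of_finiteDimensional.measurableEmbedding
    (A.linear_injective_iff.mp (A.linear.equivOfDetNeZero hA).injective)

end AffineHaar

section TriangleArea

/-- The Euclidean plane. -/
abbrev Plane : Type := EuclideanSpace ℝ (Fin 2)

/-- The signed area of the parallelogram spanned by two vectors of the plane. -/
def planeCross (a b : Plane) : ℝ := a 0 * b 1 - a 1 * b 0

/-- Twice the signed area of the triangle with the given vertices. -/
def triangleDet (x : Fin 3 → Plane) : ℝ := planeCross (x 1 - x 0) (x 2 - x 0)

/-- The second moment of the area of a triangle with vertices distributed independently according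
to Lebesgue measure on `K`, which is not normalized: it scales like the fifth power of the area. -/
def areaSqMoment (K : Set Plane) : ℝ :=
  ∫ x, (triangleDet x / 2) ^ 2 ∂Measure.pi fun _ : Fin 3 => volume.restrict K

lemma planeCross_eq_det (a b : Plane) : planeCross a b = !![a 0, b 0; a 1, b 1].det := by
  rw [Matrix.det_fin_two_of, planeCross, mul_comm (b 0)]

lemma planeCross_map (f : Plane →ₗ[ℝ] Plane) (a b : Plane) :
    planeCross (f a) (f b) = LinearMap.det f * planeCross a b := by
  let e := (EuclideanSpace.basisFun (Fin 2) ℝ).toBasis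
  have planeCross_eq_basis_det (a b : Plane) : planeCross a b = e.det ![a, b] := by
    rw [planeCross_eq_det, Module.Basis.det_apply]
    congr 1
    ext i j
    fin_cases i <;> fin_cases j <;> simp [e, Module.Basis.toMatrix_apply]
  rw [planeCross_eq_basis_det, planeCross_eq_basis_det, ← Module.Basis.det_comp]
  congr 1
  ext i : 1
  fin_cases i <;> rfl

lemma triangleDet_affineMap (A : Plane →ᵃ[ℝ] Plane) (x : Fin 3 → Plane) :
    triangleDet (fun i => A (x i)) = LinearMap.det A.linear * triangleDet x := by
  simp only [triangleDet, ← planeCross_map, ← vsub_eq_sub, A.linearMap_vsub]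

lemma continuous_triangleDet : Continuous triangleDet := by
  unfold triangleDet planeCross
  fun_prop

lemma measurable_triangleDet_div_two_sq : Measurable fun x => (triangleDet x / 2) ^ 2 :=
  (continuous_triangleDet.measurable.div_const 2).pow_const 2

lemma areaSqMoment_eq_zero_of_volume_eq_zero {K : Set Plane} (hK : volume K = 0) :
    areaSqMoment K = 0 := by
  have pi_eq_zero : (Measure.pi fun _ : Fin 3 => volume.restrict K) = 0 := by
    rw [← Measure.measure_univ_eq_zero, Measure.pi_univ, Finset.prod_const,
      Measure.restrict_apply_univ, hK, Finset.card_univ, Fintype.card_fin, zero_pow three_ne_zero]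
  rw [areaSqMoment, pi_eq_zero, integral_zero_measure]

lemma volumeReal_image_affineMap (A : Plane →ᵃ[ℝ] Plane) (K : Set Plane) :
    volume.real (A '' K) = |LinearMap.det A.linear| * volume.real K := by
  rw [measureReal_def, addHaar_image_affineMap, ENNReal.toReal_mul,
    ENNReal.toReal_ofReal (abs_nonneg _), measureReal_def]

lemma areaSqMoment_image_affineMap (A : Plane →ᵃ[ℝ] Plane) (K : Set Plane) :
    areaSqMoment (A '' K) = |LinearMap.det A.linear| ^ 5 * areaSqMoment K := by
  by_cases hA : LinearMap.det A.linear = 0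
  · have volume_image : volume (A '' K) = 0 := by
      rw [addHaar_image_affineMap, hA, abs_zero, ENNReal.ofReal_zero, zero_mul]
    rw [areaSqMoment_eq_zero_of_volume_eq_zero volume_image, hA, abs_zero, zero_pow (by norm_num),
      zero_mul]
  · have change_variables := pow_card_mul_integral_pi_image (ι := Fin 3)
      (affineMap_measurableEmbedding hA) (map_affineMap_addHaar_eq_smul_addHaar volume hA) K
      measurable_triangleDet_div_two_sq
    simp only [triangleDet_affineMap, mul_div_assoc, mul_pow, integral_const_mul,
      Fintype.card_fin, Real.coe_nnabs, abs_inv] at change_variables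
    rw [inv_pow, inv_mul_eq_iff_eq_mul₀ (pow_ne_zero _ (abs_ne_zero.mpr hA)),
      ← sq_abs (LinearMap.det A.linear), ← mul_assoc, ← pow_add] at change_variables
    exact change_variables

end TriangleArea

section RightTriangle

lemma integral_pow_mul_one_sub_pow (i j : ℕ) :
    ∫ s in (0 : ℝ)..1, s ^ i * (1 - s) ^ j = i.factorial * j.factorial / (i + j + 1).factorial := by
  have beta_eq := Complex.betaIntegral_eq_Gamma_mul_div (i + 1) (j + 1)
    (by norm_cast; exact i.succ_pos) (by norm_cast; exact j.succ_pos)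
  rw [Complex.betaIntegral, Complex.Gamma_nat_eq_factorial, Complex.Gamma_nat_eq_factorial,
    show (i + 1 + (j + 1) : ℂ) = ((i + j + 1 : ℕ) : ℂ) + 1 by push_cast; ring,
    Complex.Gamma_nat_eq_factorial] at beta_eq
  simp only [add_sub_cancel_right, Complex.cpow_natCast] at beta_eq
  apply Complex.ofReal_injective
  rw [← intervalIntegral.integral_ofReal]
  push_cast
  exact beta_eq

/-- The vertices of the right isosceles triangle with unit legs along the coordinate axes. -/
def rightTriangleVertex : Fin 3 → Plane := ![0, !₂[1, 0], !₂[0, 1]]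

/-- The reference triangle, of which every other triangle is an affine image. -/
def rightTriangle : Set Plane := convexHull ℝ (range rightTriangleVertex)

lemma mem_rightTriangle {x : Plane} : x ∈ rightTriangle ↔ 0 ≤ x 0 ∧ 0 ≤ x 1 ∧ x 0 + x 1 ≤ 1 := by
  constructor
  · let coord (i : Fin 2) : Plane →ₗ[ℝ] ℝ := (EuclideanSpace.proj i : Plane →L[ℝ] ℝ).toLinearMap
    have convex_halfplanes : Convex ℝ {x : Plane | 0 ≤ x 0 ∧ 0 ≤ x 1 ∧ x 0 + x 1 ≤ 1} :=
      (convex_halfSpace_ge (coord 0).isLinear 0).inter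
        ((convex_halfSpace_ge (coord 1).isLinear 0).inter
          (convex_halfSpace_le (coord 0 + coord 1).isLinear 1))
    refine fun hx => convexHull_min (range_subset_iff.mpr fun i => ?_) convex_halfplanes hx
    fin_cases i <;> simp [rightTriangleVertex]
  · rintro ⟨h0, h1, h01⟩
    have combination : x = ∑ i, ![1 - x 0 - x 1, x 0, x 1] i • rightTriangleVertex i := by
      ext i
      fin_cases i <;> simp [Fin.sum_univ_three, rightTriangleVertex]
    rw [combination]
    refine (convex_convexHull ℝ _).sum_mem (fun i _ => ?_) ?_
      fun i _ => subset_convexHull ℝ _ (mem_range_self i)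
    · fin_cases i <;> simp <;> linarith
    · simp only [Fin.sum_univ_three, Matrix.cons_val]
      ring

lemma isCompact_rightTriangle : IsCompact rightTriangle :=
  (finite_range _).isCompact_convexHull (𝕜 := ℝ)

lemma setIntegral_prod_simplex_monomial (i j : ℕ) :
    ∫ z in {z : ℝ × ℝ | 0 ≤ z.1 ∧ 0 ≤ z.2 ∧ z.1 + z.2 ≤ 1}, z.1 ^ i * z.2 ^ j =
      i.factorial * j.factorial / (i + j + 2).factorial := by
  set R : Set (ℝ × ℝ) := {z | 0 ≤ z.1 ∧ 0 ≤ z.2 ∧ z.1 + z.2 ≤ 1}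
  have isCompact_R : IsCompact R := by
    refine isCompact_Icc.of_isClosed_subset ?_ (fun z hz => (?_ : z ∈ Icc (0, 0) (1, 1)))
    · exact (isClosed_le continuous_const continuous_fst).inter
        ((isClosed_le continuous_const continuous_snd).inter
          (isClosed_le (continuous_fst.add continuous_snd) continuous_const))
    · exact ⟨⟨hz.1, hz.2.1⟩, by linarith [hz.2.1, hz.2.2], by linarith [hz.1, hz.2.2]⟩
  have fiber {s : ℝ} (hs : s ∈ Icc (0 : ℝ) 1) : Prod.mk s ⁻¹' R = Icc 0 (1 - s) := by
    ext y
    simp only [R, mem_preimage, mem_ofPred_eq, mem_Icc, hs.1, true_and, le_sub_iff_add_le']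
  have fiber_empty {s : ℝ} (hs : s ∉ Icc (0 : ℝ) 1) : Prod.mk s ⁻¹' R = ∅ := by
    refine eq_empty_of_forall_notMem fun y hy => hs ⟨hy.1, ?_⟩
    exact (le_add_of_nonneg_right hy.2.1).trans hy.2.2
  calc ∫ z in R, z.1 ^ i * z.2 ^ j
      = ∫ s, ∫ y in Prod.mk s ⁻¹' R, s ^ i * y ^ j :=
        setIntegral_prod_eq_integral_setIntegral_fiber (f := fun z => z.1 ^ i * z.2 ^ j)
          isCompact_R.measurableSet
          (ContinuousOn.integrableOn_compact isCompact_R (by fun_prop))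
    _ = ∫ s : ℝ in Icc 0 1, s ^ i * ((1 - s) ^ (j + 1) / (j + 1)) := by
        rw [← integral_indicator measurableSet_Icc]
        refine integral_congr_ae (.of_forall fun s => ?_)
        by_cases hs : s ∈ Icc (0 : ℝ) 1
        · simp only [fiber hs, indicator_of_mem hs, integral_const_mul,
            integral_Icc_eq_integral_Ioc]
          rw [← intervalIntegral.integral_of_le (sub_nonneg.mpr hs.2), integral_pow,
            zero_pow j.succ_ne_zero, sub_zero]
        · simp only [fiber_empty hs, indicator_of_notMem hs, setIntegral_empty]
    _ = i.factorial * j.factorial / (i + j + 2).factorial := by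
        simp only [← mul_div_assoc, integral_div]
        rw [integral_Icc_eq_integral_Ioc, ← intervalIntegral.integral_of_le zero_le_one,
          integral_pow_mul_one_sub_pow, Nat.factorial_succ j, ← add_assoc]
        push_cast
        field_simp

lemma integral_rightTriangle_monomial (i j : ℕ) :
    ∫ x in rightTriangle, x 0 ^ i * x 1 ^ j =
      i.factorial * j.factorial / (i + j + 2).factorial := by
  let e : Plane ≃ᵐ ℝ × ℝ := (MeasurableEquiv.toLp 2 (Fin 2 → ℝ)).symm.trans .finTwoArrow
  have e_preserving : MeasurePreserving e :=
    (volume_preserving_finTwoArrow ℝ).comp (PiLp.volume_preserving_ofLp (Fin 2))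
  have rightTriangle_eq_preimage :
      rightTriangle = e ⁻¹' {z | 0 ≤ z.1 ∧ 0 ≤ z.2 ∧ z.1 + z.2 ≤ 1} := by
    ext x
    exact mem_rightTriangle
  rw [rightTriangle_eq_preimage, ← setIntegral_prod_simplex_monomial i j]
  exact e_preserving.setIntegral_preimage_emb e.measurableEmbedding (fun z => z.1 ^ i * z.2 ^ j) _

lemma volumeReal_rightTriangle : volume.real rightTriangle = 1 / 2 := by
  have := integral_rightTriangle_monomial 0 0
  simpa [Nat.factorial] using this

/-- The vector `(1, x₀, x₁)`: the coordinates of `x` in the plane at height one. -/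
def homogenize (x : Plane) : Fin 3 → ℝ := ![1, x 0, x 1]

lemma continuous_homogenize : Continuous homogenize := by
  unfold homogenize
  fun_prop

/-- The matrix of inertia of `K` in homogeneous coordinates. -/
def momentMatrix (K : Set Plane) : Matrix (Fin 3) (Fin 3) ℝ :=
  Matrix.of fun i j => ∫ x in K, homogenize x i * homogenize x j

lemma triangleDet_eq_det_homogenize (x : Fin 3 → Plane) :
    triangleDet x = (Matrix.of fun i j => homogenize (x j) i).det := by
  simp only [Matrix.det_fin_three, triangleDet, planeCross, homogenize, Matrix.of_apply,
    Matrix.cons_val, PiLp.sub_apply]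
  ring

lemma integrableOn_homogenize_mul {K : Set Plane} (hK : IsCompact K) (i j : Fin 3) :
    IntegrableOn (fun x => homogenize x i * homogenize x j) K :=
  have := continuous_homogenize
  ContinuousOn.integrableOn_compact hK (by fun_prop)

lemma areaSqMoment_eq_det_momentMatrix {K : Set Plane} (hK : IsCompact K) :
    areaSqMoment K = 3 / 2 * (momentMatrix K).det := by
  have andreief := integral_det_mul_det_pi (f := fun i x => homogenize x i)
    (g := fun i x => homogenize x i) (integrableOn_homogenize_mul hK)
  simp only [← triangleDet_eq_det_homogenize, ← sq, Fintype.card_fin] at andreief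
  simp only [areaSqMoment, div_pow, integral_div]
  rw [andreief, momentMatrix, show Nat.factorial 3 = 6 from rfl, Nat.cast_ofNat]
  ring

lemma areaSqMoment_rightTriangle : areaSqMoment rightTriangle = 1 / 2304 := by
  have momentMatrix_eq : momentMatrix rightTriangle =
      !![1 / 2, 1 / 6, 1 / 6; 1 / 6, 1 / 12, 1 / 24; 1 / 6, 1 / 24, 1 / 12] := by
    let a : Fin 3 → ℕ := ![0, 1, 0]
    let b : Fin 3 → ℕ := ![0, 0, 1]
    have homogenize_eq_monomial (x : Plane) (i : Fin 3) :
        homogenize x i = x 0 ^ a i * x 1 ^ b i := by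
      fin_cases i <;> simp [homogenize, a, b]
    ext i j
    calc momentMatrix rightTriangle i j
        = ∫ x in rightTriangle, x 0 ^ (a i + a j) * x 1 ^ (b i + b j) := by
          simp only [momentMatrix, Matrix.of_apply, homogenize_eq_monomial, mul_mul_mul_comm,
            ← pow_add]
      _ = _ := by
          rw [integral_rightTriangle_monomial]
          fin_cases i <;> fin_cases j <;> norm_num [a, b, Nat.factorial]
  rw [areaSqMoment_eq_det_momentMatrix isCompact_rightTriangle, momentMatrix_eq,
    Matrix.det_fin_three]
  simp only [Matrix.of_apply, Matrix.cons_val', Matrix.cons_val]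
  norm_num

lemma exists_affineMap_rightTriangleVertex (x : Fin 3 → Plane) :
    ∃ A : Plane →ᵃ[ℝ] Plane, ∀ i, A (rightTriangleVertex i) = x i := by
  let coord (i : Fin 2) : Plane →ₗ[ℝ] ℝ := (EuclideanSpace.proj i : Plane →L[ℝ] ℝ).toLinearMap
  let L : Plane →ₗ[ℝ] Plane :=
    (coord 0).smulRight (x 1 - x 0) + (coord 1).smulRight (x 2 - x 0)
  refine ⟨L.toAffineMap + AffineMap.const ℝ Plane (x 0), fun i => ?_⟩
  fin_cases i <;> simp [rightTriangleVertex, L, coord]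

section Triangle

variable (x : Fin 3 → Plane)

lemma exists_affineMap_image_rightTriangle_eq_convexHull :
    ∃ A : Plane →ᵃ[ℝ] Plane, LinearMap.det A.linear = triangleDet x ∧
      A '' rightTriangle = convexHull ℝ (range x) := by
  obtain ⟨A, hA⟩ := exists_affineMap_rightTriangleVertex x
  have triangleDet_vertex : triangleDet rightTriangleVertex = 1 := by
    simp [triangleDet, planeCross, rightTriangleVertex]
  refine ⟨A, ?_, ?_⟩
  · rw [← mul_one (LinearMap.det _), ← triangleDet_vertex, ← triangleDet_affineMap]
    simp only [hA]
  · rw [rightTriangle, A.image_convexHull, ← range_comp]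
    exact congrArg (fun y => convexHull ℝ (range y)) (funext hA)

lemma volumeReal_convexHull_range :
    volume.real (convexHull ℝ (range x)) = |triangleDet x| / 2 := by
  obtain ⟨A, det_A, image_A⟩ := exists_affineMap_image_rightTriangle_eq_convexHull x
  rw [← image_A, volumeReal_image_affineMap, det_A, volumeReal_rightTriangle, mul_one_div]

lemma areaSqMoment_convexHull_range :
    areaSqMoment (convexHull ℝ (range x)) = volume.real (convexHull ℝ (range x)) ^ 5 / 72 := by
  obtain ⟨A, det_A, image_A⟩ := exists_affineMap_image_rightTriangle_eq_convexHull x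
  rw [volumeReal_convexHull_range, ← image_A, areaSqMoment_image_affineMap, det_A,
    areaSqMoment_rightTriangle]
  ring

end Triangle

lemma momentU_two_three_eq_areaSqMoment_div (K : Set Plane) :
    momentU 2 3 K 2 = areaSqMoment K / volume.real K ^ 5 := by
  have pi_restrict : (volume : Measure (Fin 3 → Plane)).restrict {x | ∀ i, x i ∈ K} =
      Measure.pi fun _ => volume.restrict K := by
    rw [← Measure.restrict_pi_pi, volume_pi]
    congr 1
    ext x
    simp only [mem_ofPred_eq, mem_univ_pi]
  simp only [momentU, ← measureReal_def, volumeReal_convexHull_range, pi_restrict,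
    Real.rpow_two, div_pow, sq_abs]
  simp only [areaSqMoment, div_pow, integral_div, div_div]
  ring

end RightTriangle

section HalfspaceShear

/-- The piecewise affine map that fixes the half-space `ℓ ≤ 0` and shears the complementary
half-space in the direction `d`, proportionally to `ℓ`. -/
def halfspaceShear {V : Type*} [AddCommGroup V] [Module ℝ V] (ℓ : V →ᵃ[ℝ] ℝ) (d x : V) : V :=
  x + max (ℓ x) 0 • d

section Algebra

variable {V : Type*} [AddCommGroup V] [Module ℝ V] {ℓ : V →ᵃ[ℝ] ℝ} {d e v x : V}

lemma halfspaceShear_of_nonpos (hx : ℓ x ≤ 0) : halfspaceShear ℓ d x = x := by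
  rw [halfspaceShear, max_eq_right hx, zero_smul, add_zero]

/-- The affine map that `halfspaceShear ℓ d` agrees with on the half-space `0 ≤ ℓ`. -/
def affineShear (ℓ : V →ᵃ[ℝ] ℝ) (d : V) : V →ᵃ[ℝ] V where
  toFun x := x + ℓ x • d
  linear := LinearMap.transvection ℓ.linear d
  map_vadd' x v := by
    rw [ℓ.map_vadd]
    simp only [vadd_eq_add, LinearMap.transvection.apply, add_smul]
    abel

lemma halfspaceShear_of_nonneg (hx : 0 ≤ ℓ x) : halfspaceShear ℓ d x = affineShear ℓ d x := by
  rw [halfspaceShear, max_eq_left hx]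
  rfl

lemma affineMap_add_of_linear_eq_zero (hd : ℓ.linear d = 0) : ℓ (x + d) = ℓ x := by
  rw [add_comm, ← vadd_eq_add, ℓ.map_vadd, hd, zero_vadd]

lemma affineMap_halfspaceShear (hd : ℓ.linear d = 0) : ℓ (halfspaceShear ℓ d x) = ℓ x :=
  affineMap_add_of_linear_eq_zero (by rw [map_smul, hd, smul_zero])

lemma halfspaceShear_halfspaceShear (he : ℓ.linear e = 0) :
    halfspaceShear ℓ d (halfspaceShear ℓ e x) = halfspaceShear ℓ (e + d) x := by
  rw [halfspaceShear, affineMap_halfspaceShear he, halfspaceShear, halfspaceShear, smul_add,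
    add_assoc]

lemma halfspaceShear_zero : halfspaceShear ℓ 0 = id := by
  funext x
  rw [halfspaceShear, smul_zero, add_zero, id]

lemma halfspaceShear_injective (hd : ℓ.linear d = 0) : Function.Injective (halfspaceShear ℓ d) := by
  refine Function.LeftInverse.injective (g := halfspaceShear ℓ (-d)) fun x => ?_
  rw [halfspaceShear_halfspaceShear hd, add_neg_cancel, halfspaceShear_zero, id]

lemma lineMap_mem_segment_lineMap_lineMap (a b : V) {r s t : ℝ} (hrs : r ≤ s) (hst : s ≤ t) :
    AffineMap.lineMap a b s ∈ segment ℝ (AffineMap.lineMap a b r) (AffineMap.lineMap a b t) := by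
  rw [← image_segment]
  exact mem_image_of_mem _ (Icc_subset_segment ⟨hrs, hst⟩)

/-- The point where the line through `v` and `q` meets the hyperplane `ℓ = 0`, under the
normalization `ℓ v = 1`. -/
def hyperplaneCrossing (ℓ : V →ᵃ[ℝ] ℝ) (v q : V) : V := AffineMap.lineMap v q (1 - ℓ q)⁻¹

variable {Q : Set V}

lemma image_halfspaceShear_convexHull_insert_subset (hv : ℓ v = 1) (hQ : Convex ℝ Q)
    (Q_nonempty : Q.Nonempty) (Q_nonpos : ∀ q ∈ Q, ℓ q ≤ 0)
    (crossing_mem : ∀ q ∈ Q, hyperplaneCrossing ℓ v q ∈ Q) (d : V) :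
    halfspaceShear ℓ d '' convexHull ℝ (insert v Q) ⊆ convexHull ℝ (insert (v + d) Q) := by
  rintro _ ⟨x, hx, rfl⟩
  rw [convexHull_insert Q_nonempty, hQ.convexHull_eq, mem_convexJoin] at hx
  simp only [mem_singleton_iff, exists_eq_left, segment_eq_image_lineMap] at hx
  obtain ⟨q, hq, t, ⟨ht0, ht1⟩, rfl⟩ := hx
  have one_sub_pos : 0 < 1 - ℓ q := by linarith [Q_nonpos q hq]
  have ℓ_lineMap (s : ℝ) : ℓ (AffineMap.lineMap v q s) = 1 - s * (1 - ℓ q) := by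
    rw [AffineMap.apply_lineMap, hv, AffineMap.lineMap_apply_ring']
    ring
  rcases le_total (1 - ℓ q)⁻¹ t with beyond | before
  · have mem_Q : AffineMap.lineMap v q t ∈ Q := by
      have mem_segment := lineMap_mem_segment_lineMap_lineMap v q beyond ht1
      rw [AffineMap.lineMap_apply_one] at mem_segment
      exact hQ.segment_subset (crossing_mem q hq) hq mem_segment
    rw [halfspaceShear_of_nonpos (Q_nonpos _ mem_Q)]
    exact subset_convexHull ℝ _ (mem_insert_of_mem _ mem_Q)
  · have nonneg : 0 ≤ ℓ (AffineMap.lineMap v q t) := by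
      rw [ℓ_lineMap, sub_nonneg]
      rwa [← one_div, le_div_iff₀ one_sub_pos] at before
    have shear_v : affineShear ℓ d v = v + d := by
      simp only [affineShear, AffineMap.coe_mk, hv, one_smul]
    have shear_crossing :
        affineShear ℓ d (hyperplaneCrossing ℓ v q) = hyperplaneCrossing ℓ v q := by
      simp only [affineShear, AffineMap.coe_mk, hyperplaneCrossing, ℓ_lineMap,
        inv_mul_cancel₀ one_sub_pos.ne', sub_self, zero_smul, add_zero]
    have mem_segment := mem_image_of_mem (affineShear ℓ d)
      (lineMap_mem_segment_lineMap_lineMap v q ht0 before)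
    rw [AffineMap.lineMap_apply_zero, image_segment, ← hyperplaneCrossing, shear_v,
      shear_crossing] at mem_segment
    rw [halfspaceShear_of_nonneg nonneg]
    exact segment_subset_convexHull (mem_insert _ _)
      (mem_insert_of_mem _ (crossing_mem q hq)) mem_segment

lemma image_halfspaceShear_convexHull_insert (hv : ℓ v = 1) (hd : ℓ.linear d = 0)
    (hQ : Convex ℝ Q) (Q_nonempty : Q.Nonempty) (Q_nonpos : ∀ q ∈ Q, ℓ q ≤ 0)
    (crossing_mem : ∀ q ∈ Q, hyperplaneCrossing ℓ v q ∈ Q)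
    (crossing_mem' : ∀ q ∈ Q, hyperplaneCrossing ℓ (v + d) q ∈ Q) :
    halfspaceShear ℓ d '' convexHull ℝ (insert v Q) = convexHull ℝ (insert (v + d) Q) := by
  refine (image_halfspaceShear_convexHull_insert_subset hv hQ Q_nonempty Q_nonpos crossing_mem
    d).antisymm fun y hy => ⟨halfspaceShear ℓ (-d) y, ?_, ?_⟩
  · have shear_back := image_halfspaceShear_convexHull_insert_subset
      ((affineMap_add_of_linear_eq_zero hd).trans hv) hQ Q_nonempty Q_nonpos crossing_mem' (-d)
    rw [add_neg_cancel_right] at shear_back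
    exact shear_back (mem_image_of_mem _ hy)
  · rw [halfspaceShear_halfspaceShear (by rw [map_neg, hd, neg_zero]), neg_add_cancel,
      halfspaceShear_zero, id]

end Algebra

section Measure

variable {V : Type*} [NormedAddCommGroup V] [NormedSpace ℝ V] [FiniteDimensional ℝ V]
  {ℓ : V →ᵃ[ℝ] ℝ} {d : V}

lemma continuous_halfspaceShear : Continuous (halfspaceShear ℓ d) :=
  continuous_id.add
    ((ℓ.continuous_of_finiteDimensional.max continuous_const).smul continuous_const)

variable [MeasurableSpace V] [BorelSpace V]

lemma measurableEmbedding_halfspaceShear (hd : ℓ.linear d = 0) :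
    MeasurableEmbedding (halfspaceShear ℓ d) :=
  continuous_halfspaceShear.measurableEmbedding (halfspaceShear_injective hd)

lemma measurePreserving_affineShear (μ : Measure V) [μ.IsAddHaarMeasure] (hd : ℓ.linear d = 0) :
    MeasurePreserving (affineShear ℓ d) μ μ := by
  have det_linear : LinearMap.det (affineShear ℓ d).linear = 1 := by
    rw [affineShear, LinearMap.transvection.det, hd, add_zero]
  refine ⟨(affineShear ℓ d).continuous_of_finiteDimensional.measurable, ?_⟩
  rw [map_affineMap_addHaar_eq_smul_addHaar μ (det_linear ▸ one_ne_zero), det_linear, inv_one,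
    map_one, one_smul]

lemma measurePreserving_halfspaceShear (μ : Measure V) [μ.IsAddHaarMeasure]
    (hd : ℓ.linear d = 0) : MeasurePreserving (halfspaceShear ℓ d) μ μ := by
  refine ⟨continuous_halfspaceShear.measurable, Measure.ext fun s hs => ?_⟩
  rw [Measure.map_apply continuous_halfspaceShear.measurable hs]
  have measurableSet_halfspace : MeasurableSet {x | 0 ≤ ℓ x} :=
    measurableSet_le measurable_const ℓ.continuous_of_finiteDimensional.measurable
  have on_halfspace : halfspaceShear ℓ d ⁻¹' s ∩ {x | 0 ≤ ℓ x} =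
      affineShear ℓ d ⁻¹' (s ∩ {x | 0 ≤ ℓ x}) := by
    ext x
    have ℓ_shear : ℓ (affineShear ℓ d x) = ℓ x :=
      affineMap_add_of_linear_eq_zero (by rw [map_smul, hd, smul_zero])
    simp only [mem_inter_iff, mem_preimage, mem_ofPred_eq, ℓ_shear]
    exact and_congr_left fun hx => by rw [halfspaceShear_of_nonneg hx]
  have off_halfspace : halfspaceShear ℓ d ⁻¹' s \ {x | 0 ≤ ℓ x} = s \ {x | 0 ≤ ℓ x} := by
    ext x
    simp only [mem_sdiff, mem_preimage, mem_ofPred_eq, not_le]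
    exact and_congr_left fun hx => by rw [halfspaceShear_of_nonpos hx.le]
  rw [← measure_inter_add_sdiff _ measurableSet_halfspace, on_halfspace, off_halfspace,
    (measurePreserving_affineShear μ hd).measure_preimage
      (hs.inter measurableSet_halfspace).nullMeasurableSet,
    measure_inter_add_sdiff _ measurableSet_halfspace]

end Measure

section Plane

variable {ℓ : Plane →ᵃ[ℝ] ℝ} {d : Plane} {K : Set Plane}

lemma volumeReal_image_halfspaceShear (hd : ℓ.linear d = 0) (K : Set Plane) :
    volume.real (halfspaceShear ℓ d '' K) = volume.real K := by
  have := (measurePreserving_halfspaceShear volume hd).measure_preimage_emb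
    (measurableEmbedding_halfspaceShear hd) (halfspaceShear ℓ d '' K)
  rw [measureReal_def, ← this, preimage_image_eq _ (halfspaceShear_injective hd), measureReal_def]

lemma areaSqMoment_image_halfspaceShear (hd : ℓ.linear d = 0) (K : Set Plane) :
    areaSqMoment (halfspaceShear ℓ d '' K) =
      ∫ x, (triangleDet (fun i => halfspaceShear ℓ d (x i)) / 2) ^ 2
        ∂Measure.pi fun _ : Fin 3 => volume.restrict K := by
  have map_eq : volume.map (halfspaceShear ℓ d) = (1 : NNReal) • volume := by
    rw [(measurePreserving_halfspaceShear volume hd).map_eq, one_smul]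
  have change_variables := pow_card_mul_integral_pi_image (ι := Fin 3)
    (measurableEmbedding_halfspaceShear hd) map_eq K measurable_triangleDet_div_two_sq
  rwa [NNReal.coe_one, one_pow, one_mul] at change_variables

lemma triangleDet_add_smul (x : Fin 3 → Plane) (φ : Fin 3 → ℝ) (d : Plane) (t : ℝ) :
    triangleDet (fun i => x i + φ i • t • d) =
      triangleDet x +
        t * ((φ 1 - φ 0) * planeCross d (x 2 - x 0) + (φ 2 - φ 0) * planeCross (x 1 - x 0) d) := by
  simp only [triangleDet, planeCross, PiLp.sub_apply, PiLp.add_apply, PiLp.smul_apply, smul_eq_mul]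
  ring

lemma convexOn_areaSqMoment_image_halfspaceShear (hd : ℓ.linear d = 0) (hK : IsCompact K) :
    ConvexOn ℝ univ fun t : ℝ => areaSqMoment (halfspaceShear ℓ (t • d) '' K) := by
  have linear_smul (t : ℝ) : ℓ.linear (t • d) = 0 := by rw [map_smul, hd, smul_zero]
  simp only [areaSqMoment_image_halfspaceShear (linear_smul _)]
  refine convexOn_integral convex_univ (fun x => ?_) fun t _ => ?_
  · simp only [halfspaceShear, triangleDet_add_smul]
    set c := (max (ℓ (x 1)) 0 - max (ℓ (x 0)) 0) * planeCross d (x 2 - x 0) +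
      (max (ℓ (x 2)) 0 - max (ℓ (x 0)) 0) * planeCross (x 1 - x 0) d
    let affine_area : ℝ →ᵃ[ℝ] ℝ :=
      AffineMap.lineMap (triangleDet x / 2) ((triangleDet x + c) / 2)
    have affine_area_apply (t : ℝ) : (triangleDet x + t * c) / 2 = affine_area t := by
      rw [AffineMap.lineMap_apply_ring']
      ring
    simp only [affine_area_apply]
    exact even_two.convexOn_pow.comp_affineMap affine_area
  · have continuous_area :
        Continuous fun x : Fin 3 → Plane => triangleDet fun i => halfspaceShear ℓ (t • d) (x i) :=
      continuous_triangleDet.comp (continuous_pi fun i =>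
        continuous_halfspaceShear.comp (continuous_apply i))
    rw [← Measure.restrict_pi_pi]
    exact ContinuousOn.integrableOn_compact (isCompact_univ_pi fun _ => hK)
      ((continuous_area.div_const 2).pow 2).continuousOn

end Plane

end HalfspaceShear

section SlideVertex

variable {V : Type*} [AddCommGroup V] [Module ℝ V] {b : AffineBasis (Fin 3) ℝ V} {q : V} {t : ℝ}

/-- The points `q` on the far side of the line `b 1, b 2` for which the segment joining `q` to
`b 0 + t • (b 1 - b 2)` crosses that line between `b 1` and `b 2`. -/
def beyondEdge (b : AffineBasis (Fin 3) ℝ V) (t : ℝ) : Set V :=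
  {q | b.coord 0 q ≤ 0 ∧ 0 ≤ b.coord 1 q - t * b.coord 0 q ∧ 0 ≤ b.coord 2 q + t * b.coord 0 q}

lemma convex_beyondEdge (b : AffineBasis (Fin 3) ℝ V) (t : ℝ) : Convex ℝ (beyondEdge b t) :=
  ((convex_Iic (0 : ℝ)).affine_preimage (b.coord 0)).inter
    (((convex_Ici (0 : ℝ)).affine_preimage (b.coord 1 - t • b.coord 0)).inter
      ((convex_Ici (0 : ℝ)).affine_preimage (b.coord 2 + t • b.coord 0)))

lemma linear_coord_zero_sub (b : AffineBasis (Fin 3) ℝ V) : (b.coord 0).linear (b 1 - b 2) = 0 := by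
  rw [← vsub_eq_sub, AffineMap.linearMap_vsub, b.coord_apply_ne (by decide),
    b.coord_apply_ne (by decide), vsub_self]

lemma coord_add_smul_sub (b : AffineBasis (Fin 3) ℝ V) (t : ℝ) (i : Fin 3) :
    b.coord i (b 0 + t • (b 1 - b 2)) = ![1, t, -t] i := by
  rw [add_comm, ← vadd_eq_add, AffineMap.map_vadd, map_smul, ← vsub_eq_sub (b 1),
    AffineMap.linearMap_vsub]
  fin_cases i <;> simp [b.coord_apply]

lemma coord_hyperplaneCrossing (hq : b.coord 0 q ≤ 0) (t : ℝ) (i : Fin 3) :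
    b.coord i (hyperplaneCrossing (b.coord 0) (b 0 + t • (b 1 - b 2)) q) =
      (1 - b.coord 0 q)⁻¹ *
        ![0, b.coord 1 q - t * b.coord 0 q, b.coord 2 q + t * b.coord 0 q] i := by
  have : 1 - b.coord 0 q ≠ 0 := by linarith
  rw [hyperplaneCrossing, AffineMap.apply_lineMap, coord_add_smul_sub,
    AffineMap.lineMap_apply_ring']
  fin_cases i <;> simp <;> field_simp <;> ring

lemma hyperplaneCrossing_mem_segment (hq : q ∈ beyondEdge b t) :
    hyperplaneCrossing (b.coord 0) (b 0 + t • (b 1 - b 2)) q ∈ segment ℝ (b 1) (b 2) := by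
  obtain ⟨coord_zero_nonpos, coord_one_nonneg, coord_two_nonneg⟩ := hq
  set p := hyperplaneCrossing (b.coord 0) (b 0 + t • (b 1 - b 2)) q
  have coord_p := coord_hyperplaneCrossing coord_zero_nonpos t
  have coord_p_zero : b.coord 0 p = 0 := (coord_p 0).trans (mul_zero _)
  have inv_nonneg : 0 ≤ (1 - b.coord 0 q)⁻¹ := inv_nonneg.mpr (by linarith)
  have sum_coord := b.sum_coord_apply_eq_one p
  have combination := b.linear_combination_coord_eq_self p
  rw [Fin.sum_univ_three, coord_p_zero, zero_add] at sum_coord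
  rw [Fin.sum_univ_three, coord_p_zero, zero_smul, zero_add] at combination
  refine ⟨b.coord 1 p, b.coord 2 p, ?_, ?_, sum_coord, combination⟩
  · exact (coord_p 1).symm ▸ mul_nonneg inv_nonneg coord_one_nonneg
  · exact (coord_p 2).symm ▸ mul_nonneg inv_nonneg coord_two_nonneg

lemma image_halfspaceShear_coord_convexHull_range_union {R : Set V}
    (subset_zero : R ⊆ beyondEdge b 0) (subset_t : R ⊆ beyondEdge b t) :
    halfspaceShear (b.coord 0) (t • (b 1 - b 2)) '' convexHull ℝ (range b ∪ R) =
      convexHull ℝ (insert (b 0 + t • (b 1 - b 2)) (insert (b 1) (insert (b 2) R))) := by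
  set S : Set V := insert (b 1) (insert (b 2) R)
  have range_union : range b ∪ R = insert (b 0) S := by
    ext p
    simp [S, Fin.exists_fin_succ, eq_comm (a := p), or_assoc]
  have convexHull_insert_convexHull (p : V) :
      convexHull ℝ (insert p (convexHull ℝ S)) = convexHull ℝ (insert p S) := by
    rw [insert_eq, convexHull_convexHull_union_right, ← insert_eq]
  have hull_subset {s : ℝ} (R_subset : R ⊆ beyondEdge b s) : convexHull ℝ S ⊆ beyondEdge b s := by
    refine convexHull_min (insert_subset ?_ (insert_subset ?_ R_subset)) (convex_beyondEdge b s) <;>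
      simp [beyondEdge, b.coord_apply]
  have edge_subset : segment ℝ (b 1) (b 2) ⊆ convexHull ℝ S :=
    segment_subset_convexHull (mem_insert _ _) (mem_insert_of_mem _ (mem_insert _ _))
  rw [range_union, ← convexHull_insert_convexHull, ← convexHull_insert_convexHull]
  refine image_halfspaceShear_convexHull_insert (b.coord_apply_eq 0) ?_ (convex_convexHull ℝ S)
    ⟨b 1, edge_subset (left_mem_segment ℝ _ _)⟩ (fun q hq => (hull_subset subset_zero hq).1)
    (fun q hq => edge_subset ?_)
    fun q hq => edge_subset (hyperplaneCrossing_mem_segment (hull_subset subset_t hq))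
  · rw [map_smul, linear_coord_zero_sub, smul_zero]
  · simpa only [zero_smul, add_zero] using
      hyperplaneCrossing_mem_segment (hull_subset subset_zero hq)

lemma exists_slide_mem_segment {R : Finset V} (R_nonempty : R.Nonempty)
    (hR : ∀ q ∈ R, b.coord 0 q < 0 ∧ 0 ≤ b.coord 1 q ∧ 0 ≤ b.coord 2 q) :
    ∃ t : ℝ, 0 ≤ t ∧ ↑R ⊆ beyondEdge b t ∧
      ∃ q ∈ R, b 1 ∈ segment ℝ (b 0 + t • (b 1 - b 2)) q := by
  obtain ⟨q, hq, q_min⟩ := R.exists_min_image (fun q => b.coord 2 q / -b.coord 0 q) R_nonempty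
  set t := b.coord 2 q / -b.coord 0 q with ht
  have t_nonneg : 0 ≤ t := div_nonneg (hR q hq).2.2 (neg_nonneg.mpr (hR q hq).1.le)
  have R_subset : ↑R ⊆ beyondEdge b t := fun p hp => by
    obtain ⟨neg, nonneg₁, _⟩ := hR p hp
    have t_le := (le_div_iff₀ (neg_pos.mpr neg)).mp (q_min p hp)
    exact ⟨neg.le, by nlinarith, by linarith⟩
  refine ⟨t, t_nonneg, R_subset, q, hq, ?_⟩
  have q_neg := (hR q hq).1
  have crossing_eq : hyperplaneCrossing (b.coord 0) (b 0 + t • (b 1 - b 2)) q = b 1 := by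
    have coord_two : b.coord 2 q + t * b.coord 0 q = 0 := by
      rw [ht, div_neg, neg_mul, div_mul_cancel₀ _ q_neg.ne, add_neg_cancel]
    have coord_one : b.coord 1 q - t * b.coord 0 q = 1 - b.coord 0 q := by
      linarith [Fin.sum_univ_three (b.coord · q) ▸ b.sum_coord_apply_eq_one q]
    have inv_mul : (1 - b.coord 0 q)⁻¹ * (1 - b.coord 0 q) = 1 :=
      inv_mul_cancel₀ (by linarith)
    refine b.ext_elem fun i => ?_
    rw [coord_hyperplaneCrossing q_neg.le, coord_two, coord_one, b.coord_apply]
    fin_cases i <;> simp [inv_mul]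
  have one_le : 1 ≤ 1 - b.coord 0 q := by linarith
  have crossing_mem := lineMap_mem_segment ℝ (b 0 + t • (b 1 - b 2)) q
    ⟨inv_nonneg.mpr (zero_le_one.trans one_le), inv_le_one_of_one_le₀ one_le⟩
  rwa [← hyperplaneCrossing, crossing_eq] at crossing_mem

lemma convexHull_insert_of_mem_convexHull {s : Set V} {p : V} (hp : p ∈ convexHull ℝ s) :
    convexHull ℝ (insert p s) = convexHull ℝ s :=
  (convexHull_min (insert_subset hp (subset_convexHull ℝ s)) (convex_convexHull ℝ s)).antisymm
    (convexHull_mono (subset_insert p s))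

lemma exists_slide_nonneg_eq_convexHull {R : Finset V} (R_nonempty : R.Nonempty)
    (hR : ∀ q ∈ R, b.coord 0 q < 0 ∧ 0 ≤ b.coord 1 q ∧ 0 ≤ b.coord 2 q) :
    ∃ t : ℝ, 0 ≤ t ∧ ∃ T : Finset V, T.card ≤ R.card + 2 ∧
      halfspaceShear (b.coord 0) (t • (b 1 - b 2)) '' convexHull ℝ (range b ∪ R) =
        convexHull ℝ T := by
  classical
  obtain ⟨t, t_nonneg, R_subset, q, hq, mem_segment⟩ := exists_slide_mem_segment R_nonempty hR
  refine ⟨t, t_nonneg, insert (b 0 + t • (b 1 - b 2)) (insert (b 2) R),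
    (Finset.card_insert_le _ _).trans (Nat.succ_le_succ (Finset.card_insert_le _ _)), ?_⟩
  set v := b 0 + t • (b 1 - b 2)
  have R_subset_zero : ↑R ⊆ beyondEdge b 0 := fun q hq => by
    simpa only [beyondEdge, mem_ofPred_eq, zero_mul, sub_zero, add_zero] using
      ⟨(hR q hq).1.le, (hR q hq).2⟩
  have b_one_mem : b 1 ∈ convexHull ℝ (insert v (insert (b 2) (R : Set V))) :=
    segment_subset_convexHull (mem_insert _ _)
      (mem_insert_of_mem _ (mem_insert_of_mem _ hq)) mem_segment
  rw [image_halfspaceShear_coord_convexHull_range_union R_subset_zero R_subset, insert_comm,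
    convexHull_insert_of_mem_convexHull b_one_mem, Finset.coe_insert, Finset.coe_insert]

lemma exists_slide_nonpos_eq_convexHull {R : Finset V} (R_nonempty : R.Nonempty)
    (hR : ∀ q ∈ R, b.coord 0 q < 0 ∧ 0 ≤ b.coord 1 q ∧ 0 ≤ b.coord 2 q) :
    ∃ t : ℝ, t ≤ 0 ∧ ∃ T : Finset V, T.card ≤ R.card + 2 ∧
      halfspaceShear (b.coord 0) (t • (b 1 - b 2)) '' convexHull ℝ (range b ∪ R) =
        convexHull ℝ T := by
  have swap_zero : Equiv.swap (1 : Fin 3) 2 0 = 0 := rfl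
  obtain ⟨t, t_nonneg, T, T_card, T_eq⟩ :=
    exists_slide_nonneg_eq_convexHull (b := b.reindex (Equiv.swap 1 2)) R_nonempty fun q hq => by
      simpa [swap_zero, and_comm] using hR q hq
  refine ⟨-t, neg_nonpos.mpr t_nonneg, T, T_card, ?_⟩
  rw [AffineBasis.coe_reindex, EquivLike.range_comp] at T_eq
  rw [neg_smul, ← smul_neg, neg_sub]
  simpa [swap_zero] using T_eq

end SlideVertex

section Corner

lemma planeCross_smul_add_planeCross_smul_add_planeCross_smul (x y z : Plane) :
    planeCross y z • x + planeCross z x • y + planeCross x y • z = 0 := by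
  ext i
  fin_cases i <;> simp [planeCross] <;> ring

lemma planeCross_swap (x y : Plane) : planeCross x y = -planeCross y x := by
  rw [planeCross, planeCross]
  ring

lemma planeCross_smul_add_smul (x y : Plane) (r s : ℝ) :
    planeCross (r • x + s • y) y = r * planeCross x y := by
  simp only [planeCross, PiLp.add_apply, PiLp.smul_apply, smul_eq_mul]
  ring

variable {f : Plane →L[ℝ] ℝ}

lemma smul_eq_smul_of_planeCross_eq_zero {x y : Plane} (hxy : planeCross x y = 0)
    (f : Plane →L[ℝ] ℝ) : f x • y = f y • x := by
  have proportional (z : Plane) : planeCross y z * f x = planeCross x z * f y := by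
    have := congrArg f (planeCross_smul_add_planeCross_smul_add_planeCross_smul x y z)
    simp only [map_add, map_smul, smul_eq_mul, hxy, planeCross_swap z x, map_zero] at this
    linarith
  have fst := proportional (EuclideanSpace.single 1 1)
  have snd := proportional (EuclideanSpace.single 0 1)
  ext i
  fin_cases i <;> simp [planeCross] at fst snd ⊢ <;> linarith

/-- In an open half-plane, ordering directions by angle is ordering them by the quotient of two
linear functionals. -/
lemma exists_extreme_directions {P : Finset Plane} (P_nonempty : P.Nonempty)
    (f_pos : ∀ p ∈ P, 0 < f p) :
    ∃ u ∈ P, ∃ w ∈ P, ∀ p ∈ P, 0 ≤ planeCross u p ∧ 0 ≤ planeCross p w := by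
  obtain ⟨z, hz⟩ := P_nonempty
  have planeCross_nonneg {x y : Plane} (hx : x ∈ P) (hy : y ∈ P)
      (slope_le : planeCross z x / f x ≤ planeCross z y / f y) : 0 ≤ planeCross x y := by
    rw [div_le_div_iff₀ (f_pos x hx) (f_pos y hy)] at slope_le
    have := congrArg f (planeCross_smul_add_planeCross_smul_add_planeCross_smul x y z)
    simp only [map_add, map_smul, smul_eq_mul, planeCross_swap y z, map_zero] at this
    exact nonneg_of_mul_nonneg_left (by linarith) (f_pos z hz)
  obtain ⟨u, hu, u_min⟩ := P.exists_min_image (fun p => planeCross z p / f p) ⟨z, hz⟩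
  obtain ⟨w, hw, w_max⟩ := P.exists_max_image (fun p => planeCross z p / f p) ⟨z, hz⟩
  exact ⟨u, hu, w, hw, fun p hp =>
    ⟨planeCross_nonneg hu hp (u_min p hp), planeCross_nonneg hp hw (w_max p hp)⟩⟩

end Corner

section ConvexPolygon

lemma exists_affineBasis_of_triangleDet_ne_zero {x : Fin 3 → Plane} (hx : triangleDet x ≠ 0) :
    ∃ b : AffineBasis (Fin 3) ℝ Plane, ⇑b = x := by
  have span_eq_top : affineSpan ℝ (range x) = ⊤ := by
    by_contra span_ne_top
    have volume_hull : volume (convexHull ℝ (range x)) = 0 :=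
      measure_mono_null (convexHull_subset_affineSpan _)
        (Measure.addHaar_affineSubspace volume _ span_ne_top)
    have area_eq := volumeReal_convexHull_range x
    rw [measureReal_def, volume_hull, ENNReal.toReal_zero] at area_eq
    exact hx (abs_eq_zero.mp (by linarith))
  have independent : AffineIndependent ℝ x := by
    rw [affineIndependent_iff_finrank_vectorSpan_eq ℝ x (Fintype.card_fin 3),
      AffineSubspace.vectorSpan_eq_top_of_affineSpan_eq_top ℝ Plane Plane span_eq_top, finrank_top,
      finrank_euclideanSpace_fin]
  exact ⟨⟨x, independent, span_eq_top⟩, rfl⟩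

lemma planeCross_sub_eq_coord_mul_triangleDet (b : AffineBasis (Fin 3) ℝ Plane) (q : Plane) :
    planeCross (q - b 0) (b 2 - b 0) = b.coord 1 q * triangleDet b ∧
      planeCross (b 1 - b 0) (q - b 0) = b.coord 2 q * triangleDet b := by
  have sum_coord := b.sum_coord_apply_eq_one q
  have combination := b.linear_combination_coord_eq_self q
  rw [Fin.sum_univ_three] at sum_coord combination
  have sub_eq : q - b 0 = b.coord 1 q • (b 1 - b 0) + b.coord 2 q • (b 2 - b 0) := by
    nth_rw 1 [← combination]
    rw [show b.coord 0 q = 1 - b.coord 1 q - b.coord 2 q by linarith]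
    module
  constructor
  · rw [sub_eq, planeCross_smul_add_smul, triangleDet]
  · rw [planeCross_swap, sub_eq, add_comm, planeCross_smul_add_smul, planeCross_swap, triangleDet]
    ring

variable {S : Finset Plane} {v p q : Plane} {f : Plane →L[ℝ] ℝ}

lemma exists_continuousLinearMap_forall_lt (hv : v ∉ convexHull ℝ (S \ {v} : Set Plane)) :
    ∃ f : Plane →L[ℝ] ℝ, ∀ p ∈ S.erase v, f v < f p := by
  have isClosed_hull : IsClosed (convexHull ℝ (S \ {v} : Set Plane)) :=
    (S.finite_toSet.sdiff.isCompact_convexHull (𝕜 := ℝ)).isClosed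
  obtain ⟨f, u, f_v_lt, lt_f⟩ :=
    geometric_hahn_banach_point_closed (convex_convexHull ℝ _) isClosed_hull hv
  refine ⟨f, fun p hp => f_v_lt.trans (lt_f p (subset_convexHull ℝ _ ?_))⟩
  rwa [← Finset.coe_erase, Finset.mem_coe]

lemma eq_of_planeCross_sub_eq_zero (hS : ∀ p ∈ S, p ∉ convexHull ℝ (S \ {p} : Set Plane))
    (hv : v ∈ S) (f_lt : ∀ p ∈ S.erase v, f v < f p) (hp : p ∈ S.erase v) (hq : q ∈ S.erase v)
    (collinear : planeCross (p - v) (q - v) = 0) : p = q := by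
  wlog f_le : f q ≤ f p generalizing p q
  · exact (this hq hp (by rw [planeCross_swap, collinear, neg_zero]) (le_of_not_ge f_le)).symm
  by_contra p_ne_q
  have f_q := f_lt q hq
  have f_sub_p : 0 < f (p - v) := by rw [map_sub]; linarith
  have q_eq : q = AffineMap.lineMap v p (f (q - v) / f (p - v)) := by
    rw [AffineMap.lineMap_apply_module', div_eq_inv_mul, mul_smul,
      ← smul_eq_smul_of_planeCross_eq_zero collinear, inv_smul_smul₀ f_sub_p.ne', sub_add_cancel]
  have ratio_mem : f (q - v) / f (p - v) ∈ Icc (0 : ℝ) 1 := by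
    rw [mem_Icc, div_le_one f_sub_p, map_sub, map_sub]
    refine ⟨div_nonneg ?_ ?_, ?_⟩ <;> linarith
  have q_mem : q ∈ segment ℝ v p := q_eq ▸ lineMap_mem_segment ℝ v p ratio_mem
  have segment_subset : segment ℝ v p ⊆ convexHull ℝ (S \ {q} : Set Plane) :=
    segment_subset_convexHull ⟨hv, (Finset.ne_of_mem_erase hq).symm⟩
      ⟨Finset.mem_of_mem_erase hp, p_ne_q⟩
  exact hS q (Finset.mem_of_mem_erase hq) (segment_subset q_mem)

lemma exists_corner (hS : ∀ p ∈ S, p ∉ convexHull ℝ (S \ {p} : Set Plane))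
    (two_lt_card : 2 < S.card) :
    ∃ v ∈ S, ∃ u ∈ S, ∃ w ∈ S, planeCross (u - v) (w - v) ≠ 0 ∧
      ∀ q ∈ S, 0 ≤ planeCross (u - v) (q - v) ∧ 0 ≤ planeCross (q - v) (w - v) := by
  obtain ⟨v, hv⟩ : S.Nonempty := Finset.card_pos.mp (by lia)
  obtain ⟨f, f_lt⟩ := exists_continuousLinearMap_forall_lt (hS v hv)
  have one_lt_card : 1 < (S.erase v).card := by rw [Finset.card_erase_of_mem hv]; lia
  have f_pos : ∀ d ∈ (S.erase v).image (· - v), 0 < f d := by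
    simpa only [Finset.forall_mem_image, map_sub, sub_pos] using f_lt
  obtain ⟨_, u_mem, _, w_mem, extreme⟩ :=
    exists_extreme_directions ((Finset.card_pos.mp (one_pos.trans one_lt_card)).image _) f_pos
  obtain ⟨u, hu, rfl⟩ := Finset.mem_image.mp u_mem
  obtain ⟨w, hw, rfl⟩ := Finset.mem_image.mp w_mem
  rw [Finset.forall_mem_image] at extreme
  refine ⟨v, hv, u, Finset.mem_of_mem_erase hu, w, Finset.mem_of_mem_erase hw,
    fun collinear => ?_, fun q hq => ?_⟩
  · obtain ⟨q, hq, q_ne_u⟩ := Finset.exists_mem_ne one_lt_card u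
    have u_eq_w : u = w := eq_of_planeCross_sub_eq_zero hS hv f_lt hu hw collinear
    have planeCross_nonneg : 0 ≤ planeCross (q - v) (u - v) := u_eq_w ▸ (extreme hq).2
    rw [planeCross_swap] at planeCross_nonneg
    exact q_ne_u (eq_of_planeCross_sub_eq_zero hS hv f_lt hu hq
      ((neg_nonneg.mp planeCross_nonneg).antisymm (extreme hq).1)).symm
  · obtain rfl | q_ne_v := eq_or_ne q v
    · simp [planeCross]
    · exact extreme (Finset.mem_erase.mpr ⟨q_ne_v, hq⟩)

lemma exists_affineBasis_forall_coord_nonneg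
    (hS : ∀ p ∈ S, p ∉ convexHull ℝ (S \ {p} : Set Plane)) (two_lt_card : 2 < S.card) :
    ∃ b : AffineBasis (Fin 3) ℝ Plane, (∀ i, b i ∈ S) ∧
      ∀ q ∈ S, 0 ≤ b.coord 1 q ∧ 0 ≤ b.coord 2 q := by
  obtain ⟨v, hv, u, hu, w, hw, det_ne_zero, corner⟩ := exists_corner hS two_lt_card
  obtain ⟨b, hb⟩ := exists_affineBasis_of_triangleDet_ne_zero (x := ![v, u, w]) det_ne_zero
  obtain ⟨rfl, rfl, rfl⟩ : b 0 = v ∧ b 1 = u ∧ b 2 = w := by simp [hb]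
  have det_pos : 0 < triangleDet b := (corner _ hw).1.lt_of_ne' det_ne_zero
  refine ⟨b, Fin.forall_fin_succ.mpr ⟨hv, Fin.forall_fin_two.mpr ⟨hu, hw⟩⟩, fun q hq => ?_⟩
  obtain ⟨coord_one, coord_two⟩ := planeCross_sub_eq_coord_mul_triangleDet b q
  exact ⟨nonneg_of_mul_nonneg_left (coord_one ▸ (corner q hq).2) det_pos,
    nonneg_of_mul_nonneg_left (coord_two ▸ (corner q hq).1) det_pos⟩

end ConvexPolygon

section PolygonBound

lemma areaSqMoment_convexHull_range_union_le {b : AffineBasis (Fin 3) ℝ Plane} {R : Finset Plane}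
    (R_nonempty : R.Nonempty)
    (hR : ∀ q ∈ R, b.coord 0 q < 0 ∧ 0 ≤ b.coord 1 q ∧ 0 ≤ b.coord 2 q)
    (bound : ∀ T : Finset Plane, T.card ≤ R.card + 2 →
      areaSqMoment (convexHull ℝ T) ≤ volume.real (convexHull ℝ (T : Set Plane)) ^ 5 / 72) :
    areaSqMoment (convexHull ℝ (range b ∪ R)) ≤
      volume.real (convexHull ℝ (range b ∪ R)) ^ 5 / 72 := by
  set P := convexHull ℝ (range b ∪ R)
  have hd := linear_coord_zero_sub b
  set slide := fun s : ℝ => halfspaceShear (b.coord 0) (s • (b 1 - b 2)) '' P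
  have slide_le {s : ℝ} {T : Finset Plane} (card_le : T.card ≤ R.card + 2)
      (slide_eq : slide s = convexHull ℝ T) :
      areaSqMoment (slide s) ≤ volume.real P ^ 5 / 72 := by
    have volume_slide : volume.real (slide s) = volume.real P :=
      volumeReal_image_halfspaceShear (by rw [map_smul, hd, smul_zero]) P
    rw [← volume_slide, slide_eq]
    exact bound T card_le
  obtain ⟨t, t_nonpos, T, T_card, T_eq⟩ := exists_slide_nonpos_eq_convexHull R_nonempty hR
  obtain ⟨t', t'_nonneg, T', T'_card, T'_eq⟩ := exists_slide_nonneg_eq_convexHull R_nonempty hR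
  have P_compact : IsCompact P :=
    ((finite_range b).union R.finite_toSet).isCompact_convexHull (𝕜 := ℝ)
  have slide_zero : slide 0 = P := by simp [slide, halfspaceShear_zero]
  calc areaSqMoment P = areaSqMoment (slide 0) := by rw [slide_zero]
    _ ≤ max (areaSqMoment (slide t)) (areaSqMoment (slide t')) :=
      (convexOn_areaSqMoment_image_halfspaceShear hd P_compact).le_max_of_mem_Icc
        (mem_univ _) (mem_univ _) ⟨t_nonpos, t'_nonneg⟩
    _ ≤ volume.real P ^ 5 / 72 := max_le (slide_le T_card T_eq) (slide_le T'_card T'_eq)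

lemma areaSqMoment_convexHull_le_of_card_le_three {S : Finset Plane} (hS : S.card ≤ 3) :
    areaSqMoment (convexHull ℝ S) ≤ volume.real (convexHull ℝ (S : Set Plane)) ^ 5 / 72 := by
  obtain rfl | S_nonempty := S.eq_empty_or_nonempty
  · simp [areaSqMoment_eq_zero_of_volume_eq_zero]
  have : Nonempty S := S_nonempty.to_subtype
  obtain ⟨e⟩ : Nonempty (S ↪ Fin 3) :=
    Function.Embedding.nonempty_of_card_le (by simpa using hS)
  have range_eq : range (Subtype.val ∘ Function.invFun e) = (S : Set Plane) := by
    rw [(Function.invFun_surjective e.injective).range_comp, Subtype.range_coe]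
  exact range_eq ▸ (areaSqMoment_convexHull_range _).le

lemma exists_affineBasis_range_union_eq {S : Finset Plane}
    (hS : ∀ p ∈ S, p ∉ convexHull ℝ (S \ {p} : Set Plane)) (two_lt_card : 2 < S.card) :
    ∃ (b : AffineBasis (Fin 3) ℝ Plane) (R : Finset Plane), range b ∪ R = (S : Set Plane) ∧
      R.card + 3 = S.card ∧ ∀ q ∈ R, b.coord 0 q < 0 ∧ 0 ≤ b.coord 1 q ∧ 0 ≤ b.coord 2 q := by
  obtain ⟨b, b_mem, coord_nonneg⟩ := exists_affineBasis_forall_coord_nonneg hS two_lt_card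
  have image_subset : Finset.univ.image b ⊆ S := Finset.image_subset_iff.mpr fun i _ => b_mem i
  have card_image : (Finset.univ.image b).card = 3 := by
    rw [Finset.card_image_of_injective _ b.ind.injective, Finset.card_univ, Fintype.card_fin]
  refine ⟨b, S \ Finset.univ.image b, ?_, ?_, fun q hq => ?_⟩
  · rw [Finset.coe_sdiff, Finset.coe_image, Finset.coe_univ, image_univ,
      union_sdiff_cancel (range_subset_iff.mpr b_mem)]
  · have card_add := Finset.card_sdiff_add_card_eq_card image_subset
    rwa [card_image] at card_add
  · obtain ⟨hqS, hqb⟩ := Finset.mem_sdiff.mp hq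
    refine ⟨not_le.mp fun coord_zero_nonneg => hS q hqS ?_, coord_nonneg q hqS⟩
    have range_subset : range b ⊆ S \ {q} := range_subset_iff.mpr fun i =>
      ⟨b_mem i, fun h => hqb (Finset.mem_image.mpr ⟨i, Finset.mem_univ i, h⟩)⟩
    refine convexHull_mono range_subset ?_
    rw [b.convexHull_eq_nonneg_coord]
    exact Fin.forall_fin_succ.mpr
      ⟨coord_zero_nonneg, Fin.forall_fin_two.mpr (coord_nonneg q hqS)⟩

theorem areaSqMoment_convexHull_finset_le (S : Finset Plane) :
    areaSqMoment (convexHull ℝ S) ≤ volume.real (convexHull ℝ (S : Set Plane)) ^ 5 / 72 := by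
  induction hn : S.card using Nat.strong_induction_on generalizing S with
  | _ n ih =>
    subst hn
    by_cases card_le : S.card ≤ 3
    · exact areaSqMoment_convexHull_le_of_card_le_three card_le
    by_cases hS : ∀ p ∈ S, p ∉ convexHull ℝ (S \ {p} : Set Plane)
    · obtain ⟨b, R, union_eq, card_add, hR⟩ := exists_affineBasis_range_union_eq hS (by lia)
      rw [← union_eq]
      exact areaSqMoment_convexHull_range_union_le (Finset.card_pos.mp (by lia)) hR
        fun T T_card => ih T.card (by lia) T rfl
    · push Not at hS
      obtain ⟨p, hp, p_mem⟩ := hS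
      have hull_erase : convexHull ℝ (S.erase p : Set Plane) = convexHull ℝ S := by
        rw [Finset.coe_erase, ← convexHull_insert_of_mem_convexHull p_mem,
          insert_sdiff_self_of_mem hp]
      rw [← hull_erase]
      exact ih _ (Finset.card_erase_lt_of_mem hp) _ rfl

end PolygonBound

section Approximation

open Filter Topology

lemma monotone_convexHull_image_Iio {V : Type*} [AddCommGroup V] [Module ℝ V] (u : ℕ → V) :
    Monotone fun n => convexHull ℝ (u '' Iio n) := fun _ _ hmn =>
  convexHull_mono (image_mono (Iio_subset_Iio hmn))

lemma iUnion_convexHull_image_Iio {V : Type*} [AddCommGroup V] [Module ℝ V] (u : ℕ → V) :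
    ⋃ n, convexHull ℝ (u '' Iio n) = convexHull ℝ (range u) := by
  refine (iUnion_subset fun n => convexHull_mono (image_subset_range _ _)).antisymm
    (convexHull_min (range_subset_iff.mpr fun n => ?_)
      ((monotone_convexHull_image_Iio u).directed_le.convex_iUnion fun n => convex_convexHull ℝ _))
  exact mem_iUnion.mpr ⟨n + 1, subset_convexHull ℝ _ (mem_image_of_mem u (Nat.lt_succ_self n))⟩

lemma exists_iUnion_convexHull_image_Iio_ae_eq {V : Type*} [NormedAddCommGroup V]
    [NormedSpace ℝ V] [FiniteDimensional ℝ V] [MeasurableSpace V] [BorelSpace V] (μ : Measure V)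
    [μ.IsAddHaarMeasure] {K : Set V} (K_closed : IsClosed K) (K_convex : Convex ℝ K)
    (K_nonempty : K.Nonempty) :
    ∃ u : ℕ → V, ⋃ n, convexHull ℝ (u '' Iio n) =ᵐ[μ] K := by
  have : Nonempty K := K_nonempty.to_subtype
  let u : ℕ → V := Subtype.val ∘ TopologicalSpace.denseSeq K
  have K_subset : K ⊆ closure (range u) := by
    rw [range_comp]
    exact Subtype.dense_iff.mp (TopologicalSpace.denseRange_denseSeq K)
  have hull_subset : convexHull ℝ (range u) ⊆ K :=
    convexHull_min (range_subset_iff.mpr fun n => (TopologicalSpace.denseSeq K n).2) K_convex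
  have closure_hull : closure (convexHull ℝ (range u)) = K :=
    (closure_minimal hull_subset K_closed).antisymm
      (K_subset.trans (closure_mono (subset_convexHull ℝ _)))
  refine ⟨u, ?_⟩
  rw [iUnion_convexHull_image_Iio]
  have ae_eq_closure := closure_ae_eq_of_null_frontier
    ((convex_convexHull ℝ (range u)).addHaar_frontier μ)
  rw [closure_hull] at ae_eq_closure
  exact ae_eq_closure.symm

lemma tendsto_areaSqMoment_of_iUnion_ae_eq {K : Set Plane} {P : ℕ → Set Plane} (P_mono : Monotone P)
    (P_compact : ∀ n, IsCompact (P n)) (K_compact : IsCompact K)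
    (iUnion_ae_eq : ⋃ n, P n =ᵐ[volume] K) :
    Tendsto (fun n => areaSqMoment (P n)) atTop (𝓝 (areaSqMoment K)) := by
  have tendsto_momentMatrix : Tendsto (fun n => momentMatrix (P n)) atTop (𝓝 (momentMatrix K)) := by
    refine tendsto_pi_nhds.mpr fun i => tendsto_pi_nhds.mpr fun j => ?_
    simp only [momentMatrix, Matrix.of_apply, ← setIntegral_congr_set iUnion_ae_eq]
    refine tendsto_setIntegral_of_monotone (fun n => (P_compact n).measurableSet) P_mono ?_
    exact (integrableOn_homogenize_mul K_compact i j).congr_set_ae iUnion_ae_eq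
  simp only [areaSqMoment_eq_det_momentMatrix, P_compact, K_compact]
  exact ((continuous_id.matrix_det.tendsto _).comp tendsto_momentMatrix).const_mul _

lemma tendsto_measureReal_of_iUnion_ae_eq {α : Type*} [MeasurableSpace α] {μ : Measure α}
    {s : Set α} {P : ℕ → Set α} (P_mono : Monotone P) (hs : μ s ≠ ⊤)
    (iUnion_ae_eq : ⋃ n, P n =ᵐ[μ] s) :
    Tendsto (fun n => μ.real (P n)) atTop (𝓝 (μ.real s)) := by
  have tendsto_measure := tendsto_measure_iUnion_atTop (μ := μ) P_mono
  rw [measure_congr iUnion_ae_eq] at tendsto_measure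
  exact (ENNReal.tendsto_toReal hs).comp tendsto_measure

theorem areaSqMoment_le_volumeReal_pow_div {K : Set Plane} (K_compact : IsCompact K)
    (K_convex : Convex ℝ K) : areaSqMoment K ≤ volume.real K ^ 5 / 72 := by
  obtain rfl | K_nonempty := K.eq_empty_or_nonempty
  · simp [areaSqMoment_eq_zero_of_volume_eq_zero]
  obtain ⟨u, iUnion_ae_eq⟩ :=
    exists_iUnion_convexHull_image_Iio_ae_eq volume K_compact.isClosed K_convex K_nonempty
  have hull_mono := monotone_convexHull_image_Iio u
  have image_finite (n : ℕ) : (u '' Iio n).Finite := (finite_Iio n).image u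
  have tendsto_moment := tendsto_areaSqMoment_of_iUnion_ae_eq hull_mono
    (fun n => (image_finite n).isCompact_convexHull (𝕜 := ℝ)) K_compact iUnion_ae_eq
  have tendsto_area :=
    tendsto_measureReal_of_iUnion_ae_eq hull_mono K_compact.measure_ne_top iUnion_ae_eq
  refine le_of_tendsto_of_tendsto' tendsto_moment ((tendsto_area.pow 5).div_const 72) fun n => ?_
  simpa using areaSqMoment_convexHull_finset_le (image_finite n).toFinset

end Approximation

lemma measureReal_pos_of_isCompact_of_nonempty_interior {X : Type*} [TopologicalSpace X]
    [MeasurableSpace X] (μ : Measure X) [μ.IsOpenPosMeasure] [IsFiniteMeasureOnCompacts μ]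
    {K : Set X} (hK : IsCompact K) (interior_nonempty : (interior K).Nonempty) : 0 < μ.real K :=
  ENNReal.toReal_pos (μ.measure_pos_of_nonempty_interior interior_nonempty).ne' hK.measure_ne_top

/-- For every convex body `K ⊆ ℝ²` one has `𝔼 U_{K,3}² ≤ 1/72`, with equality when `K` is
a triangle.  Equivalently, the isotropic constant `L_K`, given by
`L_K² = (2! 𝔼 U_{K,3}² / 3)^{1/2}` for `K` with centroid at the origin, satisfies
`L_K ≤ L_Δ = 108^{-1/4}`. -/
theorem momentU_sq_le_one_div_seventytwo
    (K : Set (EuclideanSpace ℝ (Fin 2))) (hK : IsConvexBody K) :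
    momentU 2 3 K 2 ≤ 1 / 72 ∧
      ∀ a b c : EuclideanSpace ℝ (Fin 2), AffineIndependent ℝ ![a, b, c] →
        momentU 2 3 (convexHull ℝ {a, b, c}) 2 = 1 / 72 := by
  obtain ⟨K_compact, K_convex, interior_nonempty⟩ := hK
  constructor
  · have volume_pos : 0 < volume.real K :=
      measureReal_pos_of_isCompact_of_nonempty_interior volume K_compact interior_nonempty
    rw [momentU_two_three_eq_areaSqMoment_div, div_le_iff₀ (pow_pos volume_pos 5),
      one_div_mul_eq_div]
    exact areaSqMoment_le_volumeReal_pow_div K_compact K_convex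
  · intro a b c independent
    have range_eq : range ![a, b, c] = {a, b, c} := by
      simp only [Matrix.range_cons, Matrix.range_empty, union_empty, singleton_union]
    have span_eq_top : affineSpan ℝ (range ![a, b, c]) = ⊤ :=
      independent.affineSpan_eq_top_iff_card_eq_finrank_add_one.mpr (by simp)
    have volume_pos : 0 < volume.real (convexHull ℝ (range ![a, b, c])) :=
      measureReal_pos_of_isCompact_of_nonempty_interior volume
        ((finite_range _).isCompact_convexHull (𝕜 := ℝ))
        (interior_convexHull_nonempty_iff_affineSpan_eq_top.mpr span_eq_top)
    rw [← range_eq, momentU_two_three_eq_areaSqMoment_div, areaSqMoment_convexHull_range,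
      div_right_comm, div_self (pow_pos volume_pos 5).ne']
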